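/- For every integer n ≥ 1, the number of permutations of length n avoiding 132 and avoiding the hatted pattern 1̂23 equals the (n−1)-th Catalan number; in particular |S_n(132, 1̂23)| = |S_{n−1}(132)|. -/

import Mathlib

/-- `π` avoids the pattern 132: no subsequence `π_a π_b π_c` (`a < b < c`) satisfies
`π_a < π_c < π_b`. -/
def Avoids132 {n : ℕ} (π : Equiv.Perm (Fin n)) : Prop :=
  ¬ ∃ a b c : Fin n, a < b ∧ b < c ∧ π a < π c ∧ π c < π b


/-- `g` is an occurrence of the pattern `τ` in `π`: the indices `g a` are increasing and the
subsequence `π (g 0), …, π (g k)` is order-isomorphic to (i.e. has reduction) `τ`. -/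
def IsOcc {k n : ℕ} (τ : Equiv.Perm (Fin k)) (π : Equiv.Perm (Fin n)) (g : Fin k → Fin n) : Prop :=
  StrictMono g ∧ ∀ a b : Fin k, τ a < τ b ↔ π (g a) < π (g b)

/-- `π` avoids the hatted pattern `τ̂_(i)` (the pattern `τ ∈ S_{k+1}` with its `i`-th entry
marked): every `k`-element subsequence of `π` whose reduction is `red(τ∖τ_i)` (which is encoded
by the order-isomorphism condition with `τ ∘ i.succAbove`) can be extended, by adjoining one
further entry of `π` at some position, to a `(k+1)`-element subsequence with reduction `τ`. -/
def AvoidsHat {k n : ℕ} (τ : Equiv.Perm (Fin (k + 1))) (i : Fin (k + 1))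
    (π : Equiv.Perm (Fin n)) : Prop :=
  ∀ g : Fin k → Fin n, StrictMono g →
    (∀ a b : Fin k, τ (i.succAbove a) < τ (i.succAbove b) ↔ π (g a) < π (g b)) →
    ∃ h : Fin (k + 1) → Fin n, IsOcc τ π h ∧ Set.range g ⊆ Set.range h

/-!
A 132-avoiding permutation reads `L m R` around its maximum `m`, with every entry of `L` above
every entry of `R`; iterating, such permutations correspond to binary trees. An entry of `L` forms
an increasing pair with `m`, and only another entry of `L` can complete that pair to an increasing
triple. So `L m R` avoids `1̂23` iff every entry of `L` lies in an increasing pair inside `L`, that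
is, `L` avoids `1̂2`, and `R` avoids `1̂23`. Likewise `L m R` avoids `1̂2` iff `L` is nonempty and
`R` avoids `1̂2`. The generating functions `A` (avoiding 132 and `1̂23`), `B` (avoiding 132 and
`1̂2`) and `C` (avoiding 132) therefore satisfy `A = 1 + X B A`, `B = 1 + X (C - 1) B` and
`C = 1 + X C²`, and eliminating `B` gives `A = 1 + X C`.
-/

section PatternsOnSets

variable {α β : Type*} [LinearOrder α] [LinearOrder β]

/-- `f` avoids the pattern 132 on the set of positions `S`. The conclusion is `f j ≤ f k` instead
of `¬ f k < f j`, so only strict occurrences count when `f` is not injective. -/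
def Avoids132On (f : α → β) (S : Set α) : Prop :=
  ∀ i ∈ S, ∀ j ∈ S, ∀ k ∈ S, i < j → j < k → f i < f k → f j ≤ f k

/-- `f` avoids the hatted pattern `1̂2` on the set of positions `S`: every entry is part of an
increasing pair. This is the condition that `1̂23`-avoidance imposes on the entries to the left of
the maximum. -/
def AvoidsHat12On (f : α → β) (S : Set α) : Prop :=
  ∀ i ∈ S, ∃ j ∈ S, (i < j ∧ f i < f j) ∨ (j < i ∧ f j < f i)

/-- The entry at `k` turns the increasing pair at the positions `i < j` into an increasing
triple. -/
def Completes123 (f : α → β) (i j k : α) : Prop :=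
  (k < i ∧ f k < f i) ∨ (i < k ∧ k < j ∧ f i < f k ∧ f k < f j) ∨ (j < k ∧ f j < f k)

/-- `f` avoids the hatted pattern `1̂23` on the set of positions `S`. -/
def AvoidsHat123On (f : α → β) (S : Set α) : Prop :=
  ∀ i ∈ S, ∀ j ∈ S, i < j → f i < f j → ∃ k ∈ S, Completes123 f i j k

/-- The set of positions `insert m (L ∪ R)` is cut by the maximum, at `m`, into the positions `L`
to its left and `R` to its right, and all values on `L` exceed all values on `R`. -/
structure IsMaxSplit (f : α → β) (L : Set α) (m : α) (R : Set α) : Prop where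
  lt_of_mem_left : ∀ i ∈ L, i < m
  lt_of_mem_right : ∀ k ∈ R, m < k
  apply_lt_of_mem_left : ∀ i ∈ L, f i < f m
  apply_lt_of_mem_right : ∀ k ∈ R, f k < f m
  apply_right_lt_apply_left : ∀ i ∈ L, ∀ k ∈ R, f k < f i

variable {f : α → β} {L R : Set α} {m : α}

theorem Avoids132On.mono {S T : Set α} (hf : Avoids132On f T) (hST : S ⊆ T) : Avoids132On f S :=
  fun i hi j hj k hk => hf i (hST hi) j (hST hj) k (hST hk)

theorem Avoids132On.isMaxSplit (hf : Avoids132On f (insert m (L ∪ R)))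
    (hinj : Set.InjOn f (L ∪ R)) (hL : ∀ i ∈ L, i < m) (hR : ∀ k ∈ R, m < k)
    (hmax : ∀ i ∈ L ∪ R, f i < f m) : IsMaxSplit f L m R where
  lt_of_mem_left := hL
  lt_of_mem_right := hR
  apply_lt_of_mem_left i hi := hmax i (.inl hi)
  apply_lt_of_mem_right k hk := hmax k (.inr hk)
  apply_right_lt_apply_left i hi k hk := by
    have hne : f i ≠ f k := fun h =>
      ((hL i hi).trans (hR k hk)).ne (hinj (.inl hi) (.inr hk) h)
    by_contra! hle
    exact (hmax k (.inr hk)).not_ge <| hf i (.inr (.inl hi)) m (.inl rfl) k (.inr (.inr hk))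
      (hL i hi) (hR k hk) (hle.lt_of_ne hne)

namespace IsMaxSplit

theorem injOn (h : IsMaxSplit f L m R) (hL : Set.InjOn f L) (hR : Set.InjOn f R) :
    Set.InjOn f (insert m (L ∪ R)) := by
  obtain ⟨-, -, hLm, hRm, hRL⟩ := h
  rintro i (rfl | hi | hi) j (rfl | hj | hj) hij
  · rfl
  · exact absurd hij (hLm j hj).ne'
  · exact absurd hij (hRm j hj).ne'
  · exact absurd hij (hLm i hi).ne
  · exact hL hi hj hij
  · exact absurd hij (hRL i hi j hj).ne'
  · exact absurd hij (hRm i hi).ne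
  · exact absurd hij (hRL j hj i hi).ne
  · exact hR hi hj hij

theorem avoids132On (h : IsMaxSplit f L m R) (hL : Avoids132On f L) (hR : Avoids132On f R) :
    Avoids132On f (insert m (L ∪ R)) := by
  obtain ⟨hLpos, hRpos, hLm, hRm, hRL⟩ := h
  simp only [Avoids132On, Set.mem_insert_iff, Set.mem_union] at *
  grind

theorem avoidsHat12On_iff (h : IsMaxSplit f L m R) :
    AvoidsHat12On f (insert m (L ∪ R)) ↔ L.Nonempty ∧ AvoidsHat12On f R := by
  obtain ⟨hLpos, hRpos, hLm, hRm, hRL⟩ := h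
  simp only [AvoidsHat12On, Set.mem_insert_iff, Set.mem_union, Set.Nonempty]
  constructor
  · intro hf
    constructor
    · grind
    · grind
  · grind

theorem avoidsHat123On_iff (h : IsMaxSplit f L m R) :
    AvoidsHat123On f (insert m (L ∪ R)) ↔ AvoidsHat12On f L ∧ AvoidsHat123On f R := by
  obtain ⟨hLpos, hRpos, hLm, hRm, hRL⟩ := h
  simp only [AvoidsHat123On, AvoidsHat12On, Completes123, Set.mem_insert_iff, Set.mem_union]
  constructor
  · intro hf
    constructor
    · intro i hi
      obtain ⟨k, hk, h⟩ := hf i (by grind) m (by grind) (by grind) (by grind)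
      grind
    · intro i hi j hj hij hfij
      obtain ⟨k, hk, h⟩ := hf i (by grind) j (by grind) hij hfij
      grind
  · rintro ⟨hL, hR⟩ i hi j hj hij hfij
    grind

end IsMaxSplit

end PatternsOnSets

section Encoding

/-- `T` is the decreasing tree of the 132-avoiding word that `f` spells at the positions
`[s, s + |T|)` with the values `[v, v + |T|)`: the root sits at the maximum and the subtrees encode
what is to its left and right. The word on the left takes the larger values, hence the offset
`v + r.numNodes`. -/
def Encodes : BinaryTree Unit → (ℕ → ℕ) → ℕ → ℕ → Prop
  | .nil, _, _, _ => True
  | .node _ l r, f, s, v => f (s + l.numNodes) = v + l.numNodes + r.numNodes ∧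
      Encodes l f s (v + r.numNodes) ∧ Encodes r f (s + l.numNodes + 1) v

/-- The trees whose permutations avoid `1̂2`. -/
def AvoidsHat12Tree : BinaryTree Unit → Prop
  | .nil => True
  | .node _ l r => l ≠ .nil ∧ AvoidsHat12Tree r

/-- The trees whose permutations avoid `1̂23`. -/
def AvoidsHat123Tree : BinaryTree Unit → Prop
  | .nil => True
  | .node _ l r => AvoidsHat12Tree l ∧ AvoidsHat123Tree r

theorem Ico_add_eq_insert_union (s p q : ℕ) : Set.Ico s (s + (p + q + 1)) =
    insert (s + p) (Set.Ico s (s + p) ∪ Set.Ico (s + p + 1) (s + p + 1 + q)) := by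
  ext i
  simp only [Set.mem_insert_iff, Set.mem_union, Set.mem_Ico]
  omega

theorem sub_le_sub_of_mapsTo_Ico {f : ℕ → ℕ} {a b c d : ℕ}
    (hmaps : Set.MapsTo f (Set.Ico a b) (Set.Ico c d)) (hinj : Set.InjOn f (Set.Ico a b)) :
    b - a ≤ d - c := by
  simpa using Finset.card_le_card_of_injOn (s := Finset.Ico a b) (t := Finset.Ico c d) f
    (by simpa using hmaps) (by simpa using hinj)

theorem exists_apply_eq_of_mapsTo_Ico {f : ℕ → ℕ} {s v n : ℕ}
    (hmaps : Set.MapsTo f (Set.Ico s (s + (n + 1))) (Set.Ico v (v + (n + 1))))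
    (hinj : Set.InjOn f (Set.Ico s (s + (n + 1)))) : ∃ p ≤ n, f (s + p) = v + n := by
  by_contra! hne
  have hmaps' : Set.MapsTo f (Set.Ico s (s + (n + 1))) (Set.Ico v (v + n)) := by
    intro i hi
    obtain ⟨p, rfl⟩ := Nat.exists_eq_add_of_le hi.1
    have := hmaps hi
    have := hne p (by grind)
    grind
  have := sub_le_sub_of_mapsTo_Ico hmaps' hinj
  omega

section IsMaxSplit
variable {f : ℕ → ℕ} {s v p q : ℕ}

theorem IsMaxSplit.mapsTo_left
    (h : IsMaxSplit f (Set.Ico s (s + p)) (s + p) (Set.Ico (s + p + 1) (s + p + 1 + q)))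
    (hmaps : Set.MapsTo f (Set.Ico s (s + (p + q + 1))) (Set.Ico v (v + (p + q + 1))))
    (hinj : Set.InjOn f (Set.Ico s (s + (p + q + 1)))) (hmax : f (s + p) = v + p + q) :
    Set.MapsTo f (Set.Ico s (s + p)) (Set.Ico (v + q) (v + q + p)) := by
  rw [Ico_add_eq_insert_union] at hmaps hinj
  intro i hi
  have hbelow : Set.MapsTo f (Set.Ico (s + p + 1) (s + p + 1 + q)) (Set.Ico v (f i)) :=
    fun k hk => ⟨(hmaps (.inr (.inr hk))).1, h.apply_right_lt_apply_left i hi k hk⟩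
  have hcard := sub_le_sub_of_mapsTo_Ico hbelow (hinj.mono (by grind))
  have := h.apply_lt_of_mem_left i hi
  have := hmaps (.inr (.inl hi))
  grind

theorem IsMaxSplit.mapsTo_right
    (h : IsMaxSplit f (Set.Ico s (s + p)) (s + p) (Set.Ico (s + p + 1) (s + p + 1 + q)))
    (hmaps : Set.MapsTo f (Set.Ico s (s + (p + q + 1))) (Set.Ico v (v + (p + q + 1))))
    (hinj : Set.InjOn f (Set.Ico s (s + (p + q + 1)))) :
    Set.MapsTo f (Set.Ico (s + p + 1) (s + p + 1 + q)) (Set.Ico v (v + q)) := by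
  rw [Ico_add_eq_insert_union] at hmaps hinj
  intro k hk
  have habove : Set.MapsTo f (Set.Ico s (s + p + 1)) (Set.Ico (f k + 1) (v + (p + q + 1))) := by
    intro i hi
    have := hmaps (x := i) (by grind)
    have := h.apply_lt_of_mem_right k hk
    have := h.apply_right_lt_apply_left i
    grind
  have hcard := sub_le_sub_of_mapsTo_Ico habove (hinj.mono (by grind))
  have := hmaps (.inr (.inr hk))
  grind

end IsMaxSplit

theorem Avoids132On.exists_encodes {n : ℕ} {f : ℕ → ℕ} {s v : ℕ}
    (hmaps : Set.MapsTo f (Set.Ico s (s + n)) (Set.Ico v (v + n)))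
    (hinj : Set.InjOn f (Set.Ico s (s + n))) (hf : Avoids132On f (Set.Ico s (s + n))) :
    ∃ T : BinaryTree Unit, T.numNodes = n ∧ Encodes T f s v := by
  induction n using Nat.strong_induction_on generalizing s v with
  | _ n ih =>
  obtain _ | n := n
  · exact ⟨.nil, rfl, trivial⟩
  obtain ⟨p, hpn, hmax⟩ := exists_apply_eq_of_mapsTo_Ico hmaps hinj
  obtain ⟨q, rfl⟩ := Nat.exists_eq_add_of_le hpn
  have hset := Ico_add_eq_insert_union s p q
  have hsplit : IsMaxSplit f (Set.Ico s (s + p)) (s + p)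
      (Set.Ico (s + p + 1) (s + p + 1 + q)) := by
    refine (hset ▸ hf).isMaxSplit (hinj.mono (by grind)) (by grind) (by grind) fun i hi => ?_
    have hne : f i ≠ f (s + p) := hinj.ne (by grind) (by grind) (by grind)
    have := hmaps (x := i) (by grind)
    grind
  obtain ⟨l, rfl, hl⟩ := ih p (by omega) (hsplit.mapsTo_left hmaps hinj (by omega))
    (hinj.mono (by grind)) (hf.mono (by grind))
  obtain ⟨r, rfl, hr⟩ := ih q (by omega) (hsplit.mapsTo_right hmaps hinj)
    (hinj.mono (by grind)) (hf.mono (by grind))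
  exact ⟨.node () l r, rfl, by omega, hl, hr⟩

namespace Encodes
variable {T T' l r : BinaryTree Unit} {f g : ℕ → ℕ} {s v : ℕ}

theorem mapsTo (h : Encodes T f s v) :
    Set.MapsTo f (Set.Ico s (s + T.numNodes)) (Set.Ico v (v + T.numNodes)) := by
  induction T generalizing s v with
  | nil => simp [Set.MapsTo]
  | node _ l r ihl ihr =>
    obtain ⟨hm, hl, hr⟩ := h
    intro i hi
    have hleft := @ihl s _ hl i
    have hright := @ihr _ v hr i
    simp only [BinaryTree.numNodes, Set.mem_Ico] at *
    grind

theorem isMaxSplit (h : Encodes (.node () l r) f s v) :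
    IsMaxSplit f (Set.Ico s (s + l.numNodes)) (s + l.numNodes)
      (Set.Ico (s + l.numNodes + 1) (s + l.numNodes + 1 + r.numNodes)) := by
  obtain ⟨hm, hl, hr⟩ := h
  have hleft := hl.mapsTo
  have hright := hr.mapsTo
  constructor <;> grind [Set.MapsTo]

theorem injOn (h : Encodes T f s v) : Set.InjOn f (Set.Ico s (s + T.numNodes)) := by
  induction T generalizing s v with
  | nil => simp
  | node _ l r ihl ihr =>
    rw [BinaryTree.numNodes, Ico_add_eq_insert_union]
    exact h.isMaxSplit.injOn (ihl h.2.1) (ihr h.2.2)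

theorem avoids132On (h : Encodes T f s v) : Avoids132On f (Set.Ico s (s + T.numNodes)) := by
  induction T generalizing s v with
  | nil => simp [Avoids132On]
  | node _ l r ihl ihr =>
    rw [BinaryTree.numNodes, Ico_add_eq_insert_union]
    exact h.isMaxSplit.avoids132On (ihl h.2.1) (ihr h.2.2)

theorem avoidsHat12On_iff (h : Encodes T f s v) :
    AvoidsHat12On f (Set.Ico s (s + T.numNodes)) ↔ AvoidsHat12Tree T := by
  induction T generalizing s v with
  | nil => simp [AvoidsHat12On, AvoidsHat12Tree]
  | node _ l r _ ihr =>
    rw [BinaryTree.numNodes, Ico_add_eq_insert_union, h.isMaxSplit.avoidsHat12On_iff, ihr h.2.2]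
    cases l <;> simp [AvoidsHat12Tree]

theorem avoidsHat123On_iff (h : Encodes T f s v) :
    AvoidsHat123On f (Set.Ico s (s + T.numNodes)) ↔ AvoidsHat123Tree T := by
  induction T generalizing s v with
  | nil => simp [AvoidsHat123On, AvoidsHat123Tree]
  | node _ l r _ ihr =>
    rw [BinaryTree.numNodes, Ico_add_eq_insert_union, h.isMaxSplit.avoidsHat123On_iff,
      h.2.1.avoidsHat12On_iff, ihr h.2.2, AvoidsHat123Tree]

theorem congr (h : Encodes T f s v) (hfg : Set.EqOn f g (Set.Ico s (s + T.numNodes))) :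
    Encodes T g s v := by
  induction T generalizing s v with
  | nil => trivial
  | node _ l r ihl ihr =>
    obtain ⟨hm, hl, hr⟩ := h
    rw [BinaryTree.numNodes] at hfg
    exact ⟨by rw [← hfg (by grind), hm], ihl hl (hfg.mono (by grind)), ihr hr (hfg.mono (by grind))⟩

theorem eqOn (hf : Encodes T f s v) (hg : Encodes T g s v) :
    Set.EqOn f g (Set.Ico s (s + T.numNodes)) := by
  induction T generalizing s v with
  | nil => simp
  | node _ l r ihl ihr =>
    rw [BinaryTree.numNodes, Ico_add_eq_insert_union]
    rintro i (rfl | hi | hi)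
    · exact hf.1.trans hg.1.symm
    · exact ihl hf.2.1 hg.2.1 hi
    · exact ihr hf.2.2 hg.2.2 hi

theorem tree_unique (h : Encodes T f s v) (h' : Encodes T' f s v)
    (hcard : T.numNodes = T'.numNodes) : T = T' := by
  induction T generalizing T' s v with
  | nil => cases T' <;> simp_all
  | node _ l r ihl ihr =>
    cases T' with
    | nil => simp at hcard
    | node _ l' r' =>
      have hinj := h.injOn
      obtain ⟨hm, hl, hr⟩ := h
      obtain ⟨hm', hl', hr'⟩ := h'
      simp only [BinaryTree.numNodes] at hcard hinj
      have hroot : s + l.numNodes = s + l'.numNodes :=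
        hinj (by grind) (by grind) (by omega)
      have hleft : l.numNodes = l'.numNodes := by omega
      have hright : r.numNodes = r'.numNodes := by omega
      rw [ihl hl (hright ▸ hl') hleft, ihr hr (hleft ▸ hr') hright]

end Encodes

theorem exists_encodes (T : BinaryTree Unit) (s v : ℕ) : ∃ f, Encodes T f s v := by
  induction T generalizing s v with
  | nil => exact ⟨id, trivial⟩
  | node _ l r ihl ihr =>
    obtain ⟨f, hf⟩ := ihl s (v + r.numNodes)
    obtain ⟨g, hg⟩ := ihr (s + l.numNodes + 1) v
    refine ⟨fun i => if i < s + l.numNodes then f i else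
      if i = s + l.numNodes then v + l.numNodes + r.numNodes else g i, by simp,
      hf.congr fun i hi => ?_, hg.congr fun i hi => ?_⟩ <;> grind

end Encoding

section TreeCounting

open Finset BinaryTree PowerSeries

open scoped Classical in
/-- The number of binary trees with `n` nodes that satisfy `P`. -/
noncomputable def numTrees (P : BinaryTree Unit → Prop) (n : ℕ) : ℕ :=
  #{T ∈ treesOfNumNodesEq n | P T}

/-- The generating function, by number of nodes, of the binary trees that satisfy `P`. The
coefficients are integers because the functional equations are solved by subtraction. -/
noncomputable def treeSeries (P : BinaryTree Unit → Prop) : ℤ⟦X⟧ :=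
  .mk fun n => (numTrees P n : ℤ)

theorem numTrees_true (n : ℕ) : numTrees (fun _ => True) n = catalan n := by
  simp [numTrees, treesOfNumNodesEq_card_eq_catalan]

variable {P Q R : BinaryTree Unit → Prop}

theorem numTrees_succ (h : ∀ l r, P (.node () l r) ↔ Q l ∧ R r) (n : ℕ) :
    numTrees P (n + 1) = ∑ ij ∈ antidiagonal n, numTrees Q ij.1 * numTrees R ij.2 := by
  classical
  have hdisj : (antidiagonal n : Set (ℕ × ℕ)).PairwiseDisjoint fun ij =>
      {T ∈ pairwiseNode (treesOfNumNodesEq ij.1) (treesOfNumNodesEq ij.2) | P T} := by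
    simp_rw [Set.PairwiseDisjoint, Set.Pairwise, disjoint_left]
    aesop
  simp only [numTrees]
  rw [treesOfNumNodesEq_succ, filter_biUnion, card_biUnion hdisj]
  refine sum_congr rfl fun ij _ => ?_
  rw [filter_map, card_map, ← card_product, ← filter_product]
  exact congrArg card (filter_congr fun T _ => h T.1 T.2)

theorem coeff_treeSeries (n : ℕ) : coeff n (treeSeries P) = numTrees P n := coeff_mk ..

open scoped Classical in
theorem treeSeries_eq (h : ∀ l r, P (.node () l r) ↔ Q l ∧ R r) :
    treeSeries P = (if P .nil then 1 else 0) + X * (treeSeries Q * treeSeries R) := by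
  ext n
  cases n with
  | zero => by_cases hP : P .nil <;> simp [treeSeries, numTrees, hP, filter_singleton]
  | succ n =>
    rw [map_add, coeff_succ_X_mul, coeff_mul, coeff_treeSeries, numTrees_succ h]
    simp only [coeff_treeSeries]
    split_ifs <;> simp [coeff_one]

theorem treeSeries_true :
    treeSeries (fun _ => True) =
      1 + X * (treeSeries (fun _ => True) * treeSeries fun _ => True) := by
  simpa using treeSeries_eq (P := fun _ => True) (Q := fun _ => True) (R := fun _ => True) (by simp)

theorem treeSeries_ne_nil : treeSeries (· ≠ .nil) = treeSeries (fun _ => True) - 1 := by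
  rw [treeSeries_true, add_sub_cancel_left]
  simpa using treeSeries_eq (P := (· ≠ .nil)) (Q := fun _ => True) (R := fun _ => True) (by simp)

theorem eq_one_add_mul_of_catalan_equations {K : Type*} [CommRing K] {x A B C : K}
    (hC : C = 1 + x * (C * C)) (hB : B = 1 + x * ((C - 1) * B)) (hA : A = 1 + x * (B * A)) :
    A = 1 + x * C := by
  have hCB : C = B * (1 + x * C) := by linear_combination B * hC - C * hB
  have hinv : (1 + x * C) * (1 - x * B) = 1 := by linear_combination x * hCB
  linear_combination (1 + x * C) * hA - A * hinv

theorem treeSeries_avoidsHat123Tree :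
    treeSeries AvoidsHat123Tree = 1 + X * treeSeries fun _ => True := by
  refine eq_one_add_mul_of_catalan_equations (B := treeSeries AvoidsHat12Tree) treeSeries_true
    ?_ ?_
  · simpa [AvoidsHat12Tree, treeSeries_ne_nil] using
      treeSeries_eq (P := AvoidsHat12Tree) fun _ _ => Iff.rfl
  · simpa [AvoidsHat123Tree] using treeSeries_eq (P := AvoidsHat123Tree) fun _ _ => Iff.rfl

theorem numTrees_avoidsHat123Tree_succ (n : ℕ) :
    numTrees AvoidsHat123Tree (n + 1) = catalan n := by
  have h := congrArg (coeff (n + 1)) treeSeries_avoidsHat123Tree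
  rw [map_add, coeff_succ_X_mul, coeff_treeSeries, coeff_treeSeries, numTrees_true] at h
  simpa [coeff_one] using h

end TreeCounting

section Occurrences

variable {n : ℕ} {π : Equiv.Perm (Fin n)}

theorem isOcc_one_iff {k : ℕ} {g : Fin k → Fin n} :
    IsOcc (1 : Equiv.Perm (Fin k)) π g ↔ StrictMono g ∧ StrictMono (π ∘ g) :=
  and_congr_right fun _ =>
    ⟨fun h a b hab => (h a b).1 hab, fun h _ _ => h.lt_iff_lt.symm⟩

theorem avoidsHat_one_iff {k : ℕ} {i : Fin (k + 1)} :
    AvoidsHat (1 : Equiv.Perm (Fin (k + 1))) i π ↔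
      ∀ g : Fin k → Fin n, StrictMono g → StrictMono (π ∘ g) →
        ∃ h : Fin (k + 1) → Fin n, (StrictMono h ∧ StrictMono (π ∘ h)) ∧
          Set.range g ⊆ Set.range h := by
  have hocc (g : Fin k → Fin n) :
      (∀ a b, (1 : Equiv.Perm (Fin (k + 1))) (i.succAbove a) <
        (1 : Equiv.Perm (Fin (k + 1))) (i.succAbove b) ↔ π (g a) < π (g b)) ↔
      StrictMono (π ∘ g) := by
    simp only [Equiv.Perm.one_apply, i.strictMono_succAbove.lt_iff_lt]
    exact ⟨fun h a b hab => (h a b).1 hab, fun h _ _ => h.lt_iff_lt.symm⟩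
  simp only [AvoidsHat, hocc, isOcc_one_iff]

theorem exists_range_subset_iff_exists_completes123 {α β : Type*} [LinearOrder α] [LinearOrder β]
    {f : α → β} {g : Fin 2 → α} (hg : StrictMono g) (hfg : StrictMono (f ∘ g)) :
    (∃ h : Fin 3 → α, (StrictMono h ∧ StrictMono (f ∘ h)) ∧ Set.range g ⊆ Set.range h) ↔
      ∃ k, Completes123 f (g 0) (g 1) k := by
  simp only [Set.range_subset_iff, Fin.forall_fin_two]
  constructor
  · rintro ⟨h, ⟨hh, hfh⟩, ⟨a, ha⟩, ⟨b, hb⟩⟩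
    have hab : a < b := by rw [← hh.lt_iff_lt, ha, hb]; exact hg Fin.zero_lt_one
    rw [← ha, ← hb]
    obtain ⟨rfl, rfl⟩ | ⟨rfl, rfl⟩ | ⟨rfl, rfl⟩ :
        a = 1 ∧ b = 2 ∨ a = 0 ∧ b = 2 ∨ a = 0 ∧ b = 1 := by omega
    · exact ⟨h 0, .inl ⟨hh (by decide), hfh (by decide)⟩⟩
    · exact ⟨h 1, .inr (.inl ⟨hh (by decide), hh (by decide), hfh (by decide), hfh (by decide)⟩)⟩
    · exact ⟨h 2, .inr (.inr ⟨hh (by decide), hfh (by decide)⟩)⟩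
  · have h01 : g 0 < g 1 := hg Fin.zero_lt_one
    have hf01 : f (g 0) < f (g 1) := hfg Fin.zero_lt_one
    rintro ⟨k, ⟨hk, hfk⟩ | ⟨hk, hk', hfk, hfk'⟩ | ⟨hk, hfk⟩⟩
    · refine ⟨![k, g 0, g 1], ?_, ⟨1, rfl⟩, ⟨2, rfl⟩⟩
      simp [Fin.strictMono_iff_lt_succ, Fin.forall_fin_two, *]
    · refine ⟨![g 0, k, g 1], ?_, ⟨0, rfl⟩, ⟨2, rfl⟩⟩
      simp [Fin.strictMono_iff_lt_succ, Fin.forall_fin_two, *]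
    · refine ⟨![g 0, g 1, k], ?_, ⟨0, rfl⟩, ⟨1, rfl⟩⟩
      simp [Fin.strictMono_iff_lt_succ, Fin.forall_fin_two, *]

theorem avoidsHat_one_zero_iff :
    AvoidsHat (1 : Equiv.Perm (Fin 3)) 0 π ↔
      ∀ i j, i < j → π i < π j → ∃ k, Completes123 π i j k := by
  rw [avoidsHat_one_iff]
  constructor
  · intro h i j hij hπij
    have hg : StrictMono ![i, j] := by simpa
    have hπg : StrictMono (π ∘ ![i, j]) := by simpa [Fin.strictMono_iff_lt_succ]
    exact (exists_range_subset_iff_exists_completes123 hg hπg).1 (h _ hg hπg)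
  · intro h g hg hπg
    exact (exists_range_subset_iff_exists_completes123 hg hπg).2
      (h _ _ (hg Fin.zero_lt_one) (hπg Fin.zero_lt_one))

/-- The permutation of `ℕ` which acts as `π` on `{0, …, n - 1}` and fixes every other number. -/
def extendNat (π : Equiv.Perm (Fin n)) : Equiv.Perm ℕ := π.extendDomain Fin.equivSubtype

theorem extendNat_val (π : Equiv.Perm (Fin n)) (i : Fin n) : extendNat π i = π i :=
  π.extendDomain_apply_image Fin.equivSubtype i

theorem Ico_zero_add_eq_range_val (n : ℕ) :
    Set.Ico 0 (0 + n) = Set.range (Fin.val : Fin n → ℕ) := by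
  ext; simp

theorem mapsTo_extendNat (π : Equiv.Perm (Fin n)) :
    Set.MapsTo (extendNat π) (Set.Ico 0 (0 + n)) (Set.Ico 0 (0 + n)) := by
  rw [Ico_zero_add_eq_range_val, Set.mapsTo_range_iff]
  exact fun i => ⟨π i, (extendNat_val π i).symm⟩

theorem avoids132On_extendNat_iff :
    Avoids132On (extendNat π) (Set.Ico 0 (0 + n)) ↔ Avoids132 π := by
  simp only [Ico_zero_add_eq_range_val, Avoids132On, Avoids132, Set.forall_mem_range,
    extendNat_val, Fin.val_fin_lt, Fin.val_fin_le, not_exists, not_and, not_lt]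

theorem avoidsHat123On_extendNat_iff :
    AvoidsHat123On (extendNat π) (Set.Ico 0 (0 + n)) ↔
      AvoidsHat (1 : Equiv.Perm (Fin 3)) 0 π := by
  simp only [avoidsHat_one_zero_iff, Ico_zero_add_eq_range_val, AvoidsHat123On, Completes123,
    Set.forall_mem_range, Set.exists_range_iff, extendNat_val, Fin.val_fin_lt]

end Occurrences

theorem exists_encodes_extendNat_iff {n : ℕ} {π : Equiv.Perm (Fin n)} :
    (∃ T : BinaryTree Unit, T.numNodes = n ∧ Encodes T (extendNat π) 0 0) ↔ Avoids132 π := by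
  rw [← avoids132On_extendNat_iff]
  constructor
  · rintro ⟨T, rfl, hT⟩
    exact hT.avoids132On
  · exact Avoids132On.exists_encodes (mapsTo_extendNat π) (extendNat π).injective.injOn

theorem exists_perm_encodes (T : BinaryTree Unit) :
    ∃ π : Equiv.Perm (Fin T.numNodes), Encodes T (extendNat π) 0 0 := by
  obtain ⟨f, hf⟩ := exists_encodes T 0 0
  have hmaps := hf.mapsTo
  have hinj := hf.injOn
  rw [zero_add] at hmaps hinj
  let g (i : Fin T.numNodes) : Fin T.numNodes := ⟨f i, (hmaps ⟨i.val.zero_le, i.isLt⟩).2⟩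
  have hg : Function.Injective g := fun i j hij =>
    Fin.ext (hinj (by simp) (by simp) (congrArg Fin.val hij))
  refine ⟨.ofBijective g (Finite.injective_iff_bijective.1 hg), hf.congr ?_⟩
  rw [Ico_zero_add_eq_range_val, Set.eqOn_range]
  ext i
  simp [extendNat_val, g]

theorem perm_eq_of_encodes {T : BinaryTree Unit} {π σ : Equiv.Perm (Fin T.numNodes)}
    (hπ : Encodes T (extendNat π) 0 0) (hσ : Encodes T (extendNat σ) 0 0) : π = σ := by
  have heq := hπ.eqOn hσ
  rw [Ico_zero_add_eq_range_val, Set.eqOn_range] at heq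
  ext i
  simpa [extendNat_val] using congrFun heq i

theorem card_avoids132_and {n : ℕ} {P : Equiv.Perm (Fin n) → Prop} {Q : BinaryTree Unit → Prop}
    (h : ∀ π T, T.numNodes = n → Encodes T (extendNat π) 0 0 → (P π ↔ Q T)) :
    Nat.card {π : Equiv.Perm (Fin n) | Avoids132 π ∧ P π} = numTrees Q n := by
  classical
  rw [numTrees, ← Set.ncard_coe_finset, eq_comm]
  have hperm (T : BinaryTree Unit) (hT : T.numNodes = n) :
      ∃ π : Equiv.Perm (Fin n), Encodes T (extendNat π) 0 0 := hT ▸ exists_perm_encodes T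
  choose perm hencodes using hperm
  simp only [Finset.coe_filter, BinaryTree.mem_treesOfNumNodesEq]
  refine Set.ncard_congr (fun T hT => perm T hT.1) ?_ ?_ ?_
  · rintro T ⟨hT, hQ⟩
    exact ⟨exists_encodes_extendNat_iff.1 ⟨T, hT, hencodes T hT⟩,
      (h _ T hT (hencodes T hT)).2 hQ⟩
  · rintro T T' ⟨hT, _⟩ ⟨hT', _⟩ hperm
    exact (hencodes T hT).tree_unique (hperm ▸ hencodes T' hT') (hT.trans hT'.symm)
  · rintro π ⟨hπ, hP⟩
    obtain ⟨T, rfl, hT⟩ := exists_encodes_extendNat_iff.2 hπ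
    exact ⟨T, ⟨rfl, (h π T rfl hT).1 hP⟩, perm_eq_of_encodes (hencodes T rfl) hT⟩

theorem card_avoids132 (n : ℕ) :
    Nat.card {π : Equiv.Perm (Fin n) | Avoids132 π} = catalan n := by
  simpa [numTrees_true] using
    card_avoids132_and (P := fun _ : Equiv.Perm (Fin n) => True) (Q := fun _ => True) (by simp)

theorem card_avoids132_avoidsHat123 (n : ℕ) :
    Nat.card {π : Equiv.Perm (Fin (n + 1)) |
      Avoids132 π ∧ AvoidsHat (1 : Equiv.Perm (Fin 3)) 0 π} = catalan n := by
  rw [card_avoids132_and (Q := AvoidsHat123Tree), numTrees_avoidsHat123Tree_succ]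
  rintro π T hT hencodes
  rw [← avoidsHat123On_extendNat_iff, ← hencodes.avoidsHat123On_iff, hT]

/-- Corollary `Cat`. For every `n ≥ 1`, `|S_n(132, 1̂23)|` (permutations
avoiding `132` and the hatted pattern obtained from `123` by marking its first entry) equals the
`(n−1)`-th Catalan number; in particular `|S_n(132, 1̂23)| = |S_{n−1}(132)|`. -/
theorem stmt9 (n : ℕ) (hn : 1 ≤ n) :
    Nat.card {π : Equiv.Perm (Fin n) |
        Avoids132 π ∧ AvoidsHat (1 : Equiv.Perm (Fin 3)) 0 π} = catalan (n - 1) ∧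
    Nat.card {π : Equiv.Perm (Fin n) |
        Avoids132 π ∧ AvoidsHat (1 : Equiv.Perm (Fin 3)) 0 π}
      = Nat.card {σ : Equiv.Perm (Fin (n - 1)) | Avoids132 σ} := by
  obtain ⟨n, rfl⟩ := Nat.exists_eq_add_of_le' hn
  rw [card_avoids132_avoidsHat123, Nat.add_sub_cancel, card_avoids132]
  exact ⟨rfl, rfl⟩
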